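/- (Theorem 2: Suboptimality bound for MPC with dynamic move blocking, intermediate absolute form.) Let M = N − N_B ≥ 2, let γ > 0 be a real number with (γ+1)^{M−2} > γ^M, suppose Assumption (γ, M) holds together with the relaxed-increment condition V_M(f(x,μ_M(x))) ≤ V_{M−1}(f(x,μ_M(x))) + (γ^M/(γ+1)^{M−2})·ℓ(x, μ_M(x)) for all x ∈ X. Fix a blocked input sequence ũ : Fin N_B → U and an initial state x, with N_B-step prediction x_{N_B} and blocked cost δ(x). Then the infinite-horizon cost of the dynamic-move-blocking closed loop satisfies δ(x) + V_∞^{μ_M}(x_{N_B}) ≤ δ(x) + υ(γ, M)·V_∞(x_{N_B}), where υ(γ, M) = (γ+1)^{M−2} / ((γ+1)^{M−2} − γ^M). -/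

import Mathlib

open scoped ENNReal

/-- Open-loop trajectory: `traj f x u k` is the state after `k` steps of the
dynamics `f` starting from `x` under the input sequence `u`. -/
noncomputable def traj {X U : Type*} (f : X → U → X) (x : X) (u : ℕ → U) : ℕ → X
  | 0 => x
  | k + 1 => f (traj f x u k) (u k)

/-- Extension of a finite input sequence `u : Fin N → U` to `ℕ → U`
(arbitrary values after time `N`). -/
noncomputable def extSeq {U : Type*} [Nonempty U] {N : ℕ} (u : Fin N → U) : ℕ → U :=
  fun k => if h : k < N then u ⟨k, h⟩ else Classical.arbitrary U

/-- Finite-horizon value function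
`V f ℓ N x = ⨅_{u : Fin N → U} ∑_{k=0}^{N-1} ℓ(x_u(k), u(k))`, with `V 0 ≡ 0`. -/
noncomputable def V {X U : Type*} [Nonempty U] (f : X → U → X) (ℓ : X → U → ℝ≥0∞)
    (N : ℕ) (x : X) : ℝ≥0∞ :=
  ⨅ u : Fin N → U, ∑ k ∈ Finset.range N, ℓ (traj f x (extSeq u) k) (extSeq u k)

/-- Infinite-horizon value function
`Vinf f ℓ x = ⨅_{u : ℕ → U} ∑_{k=0}^{∞} ℓ(x_u(k), u(k))`. -/
noncomputable def Vinf {X U : Type*} (f : X → U → X) (ℓ : X → U → ℝ≥0∞) (x : X) : ℝ≥0∞ :=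
  ⨅ u : ℕ → U, ∑' k : ℕ, ℓ (traj f x u k) (u k)

/-- Closed-loop trajectory under the feedback law `μ`. -/
noncomputable def clTraj {X U : Type*} (f : X → U → X) (μ : X → U) (x : X) : ℕ → X
  | 0 => x
  | k + 1 => f (clTraj f μ x k) (μ (clTraj f μ x k))

/-- Infinite-horizon closed-loop cost of the feedback law `μ`:
`Vcl f ℓ μ x = ∑_{k=0}^{∞} ℓ(x_k, μ(x_k))`. -/
noncomputable def Vcl {X U : Type*} (f : X → U → X) (ℓ : X → U → ℝ≥0∞) (μ : X → U)
    (x : X) : ℝ≥0∞ :=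
  ∑' k : ℕ, ℓ (clTraj f μ x k) (μ (clTraj f μ x k))

/-- The trajectory at time `k` depends only on the inputs before time `k`. -/
theorem traj_congr {X U : Type*} (f : X → U → X) (x : X) {u v : ℕ → U} {k : ℕ}
    (h : ∀ i < k, u i = v i) : traj f x u k = traj f x v k := by
  induction k with
  | zero => rfl
  | succ k ih =>
    simp only [traj]
    rw [ih fun i hi => h i (hi.trans k.lt_succ_self), h k k.lt_succ_self]

theorem V_le_Vinf {X U : Type*} [Nonempty U] (f : X → U → X) (ℓ : X → U → ℝ≥0∞)
    (N : ℕ) (x : X) : V f ℓ N x ≤ Vinf f ℓ x := by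
  refine le_iInf fun u => (iInf_le _ fun i : Fin N => u i).trans ?_
  have hext : ∀ k < N, extSeq (fun i : Fin N => u i) k = u k := fun k hk => by
    simp [extSeq, hk]
  refine le_trans (le_of_eq (Finset.sum_congr rfl fun k hk => ?_))
    (ENNReal.sum_le_tsum (Finset.range N))
  have hkN := Finset.mem_range.mp hk
  rw [hext k hkN, traj_congr f x fun i hi => hext i (hi.trans hkN)]

/-- A relaxed Lyapunov decrease of `W` along the closed loop bounds the closed-loop cost. -/
theorem mul_Vcl_le_of_decrease {X U : Type*} (f : X → U → X) (ℓ : X → U → ℝ≥0∞)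
    (μ : X → U) (W : X → ℝ≥0∞) (c : ℝ≥0∞)
    (h : ∀ x, c * ℓ x (μ x) + W (f x (μ x)) ≤ W x) (x : X) :
    c * Vcl f ℓ μ x ≤ W x := by
  rw [Vcl, ← ENNReal.tsum_mul_left]
  refine ENNReal.tsum_le_of_sum_range_le fun n => ?_
  suffices hn : ∑ k ∈ Finset.range n, c * ℓ (clTraj f μ x k) (μ (clTraj f μ x k)) +
      W (clTraj f μ x n) ≤ W x from le_self_add.trans hn
  induction n with
  | zero => simp [clTraj]
  | succ n ih =>
    rw [Finset.sum_range_succ, add_assoc]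
    exact (add_le_add_right (h (clTraj f μ x n)) _).trans ih

/-- Theorem 2 (intermediate absolute form): under the hypotheses of Theorem 1,
the infinite-horizon cost of the dynamic-move-blocking closed loop satisfies
`δ(x) + V_∞^{μ_M}(x_{N_B}) ≤ δ(x) + υ(γ, M)·V_∞(x_{N_B})`, with
`υ(γ, M) = (γ+1)^{M-2} / ((γ+1)^{M-2} - γ^M)` and `M = N - N_B`. -/
theorem dmb_suboptimality_abs {X U : Type*} [Nonempty X] [Nonempty U]
    (f : X → U → X) (ℓ : X → U → ℝ≥0∞) (N NB : ℕ) (hM : 2 ≤ N - NB)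
    (γ : ℝ) (hγ : 0 < γ)
    (hstrict : γ ^ (N - NB) < (γ + 1) ^ (N - NB - 2))
    (μ : ℕ → X → U)
    (hDP : ∀ k, 2 ≤ k → k ≤ N - NB → ∀ x : X,
      V f ℓ k x = ℓ x (μ k x) + V f ℓ (k - 1) (f x (μ k x)))
    (h2 : ∀ x : X, V f ℓ 2 x ≤ ENNReal.ofReal (γ + 1) * V f ℓ 1 x)
    (hk : ∀ k, 2 ≤ k → k ≤ N - NB → ∀ x : X,
      V f ℓ k x ≤ ENNReal.ofReal (γ + 1) * ℓ x (μ k x))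
    (hinc : ∀ x : X,
      V f ℓ (N - NB) (f x (μ (N - NB) x)) ≤
        V f ℓ (N - NB - 1) (f x (μ (N - NB) x)) +
          ENNReal.ofReal (γ ^ (N - NB) / (γ + 1) ^ (N - NB - 2)) *
            ℓ x (μ (N - NB) x))
    (ut : Fin NB → U) (x : X) :
    (∑ k ∈ Finset.range NB, ℓ (traj f x (extSeq ut) k) (extSeq ut k)) +
        Vcl f ℓ (μ (N - NB)) (traj f x (extSeq ut) NB) ≤
      (∑ k ∈ Finset.range NB, ℓ (traj f x (extSeq ut) k) (extSeq ut k)) +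
        ENNReal.ofReal
            ((γ + 1) ^ (N - NB - 2) / ((γ + 1) ^ (N - NB - 2) - γ ^ (N - NB))) *
          Vinf f ℓ (traj f x (extSeq ut) NB) := by
  refine add_le_add_right ?_ _
  generalize traj f x (extSeq ut) NB = y
  generalize N - NB = M at *
  set p := (γ + 1) ^ (M - 2)
  set q := γ ^ M
  have hp : 0 < p := by positivity
  have hq : 0 < q := by positivity
  have hpq : 0 < p - q := sub_pos.mpr hstrict
  have hsum : ENNReal.ofReal (q / p) + ENNReal.ofReal ((p - q) / p) = 1 := by
    rw [← ENNReal.ofReal_add (by positivity) (by positivity), ← add_div, add_sub_cancel,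
      div_self hp.ne', ENNReal.ofReal_one]
  have hprod : ENNReal.ofReal (p / (p - q)) * ENNReal.ofReal ((p - q) / p) = 1 := by
    rw [← ENNReal.ofReal_mul (by positivity), div_mul_div_cancel₀ hpq.ne', div_self hp.ne',
      ENNReal.ofReal_one]
  have hdecrease : ∀ z, ENNReal.ofReal ((p - q) / p) * ℓ z (μ M z) + V f ℓ M (f z (μ M z)) ≤
      V f ℓ M z := fun z => by
    have hz := hDP M hM le_rfl z
    by_cases htop : ℓ z (μ M z) = ∞
    · simp [hz, htop]
    · have hfin : ENNReal.ofReal (q / p) * ℓ z (μ M z) ≠ ∞ :=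
        ENNReal.mul_ne_top ENNReal.ofReal_ne_top htop
      refine (ENNReal.add_le_add_iff_left hfin).mp ?_
      calc ENNReal.ofReal (q / p) * ℓ z (μ M z) +
            (ENNReal.ofReal ((p - q) / p) * ℓ z (μ M z) + V f ℓ M (f z (μ M z)))
          = ℓ z (μ M z) + V f ℓ M (f z (μ M z)) := by
            rw [← add_assoc, ← add_mul, hsum, one_mul]
        _ ≤ ℓ z (μ M z) + (V f ℓ (M - 1) (f z (μ M z)) +
              ENNReal.ofReal (q / p) * ℓ z (μ M z)) := add_le_add_right (hinc z) _
        _ = ENNReal.ofReal (q / p) * ℓ z (μ M z) + V f ℓ M z := by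
            rw [← add_assoc, ← hz, add_comm]
  calc Vcl f ℓ (μ M) y
      = ENNReal.ofReal (p / (p - q)) *
          (ENNReal.ofReal ((p - q) / p) * Vcl f ℓ (μ M) y) := by
        rw [← mul_assoc, hprod, one_mul]
    _ ≤ ENNReal.ofReal (p / (p - q)) * Vinf f ℓ y := by
        gcongr
        exact (mul_Vcl_le_of_decrease f ℓ (μ M) (V f ℓ M) _ hdecrease y).trans
          (V_le_Vinf f ℓ M y)
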